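/- arXiv:2006.11789 — 2 statements merged into one kernel-verified Lean document; each statement's English description precedes it below -/
import Mathlib

section
/- Let σ₁, σ₂ be switching signals of length T with σ₁ ⪯ σ₂, and let P_{σ₁}(t), P_{σ₂}(t) be the solutions of the switched backward Riccati recursion with common terminal condition P_{σ₁}(T) = P_{σ₂}(T) = Q_f. Then P_{σ₂}(t) ⪯ P_{σ₁}(t) in the Loewner order for every t = 0, 1, …, T; in particular P_{σ₂}(0) ⪯ P_{σ₁}(0), so the optimal LQR cost x(0)ᵀP_σ(0)x(0) from any initial state x(0) is antitone in the partial order on switching signals. -/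
open Matrix

/-- One step of the switched backward Riccati recursion with switching value `s`:
`P ↦ Q + AᵀPA − s·AᵀPB(R + BᵀPB)⁻¹BᵀPA`. -/
noncomputable def ricStep {n m : ℕ} (A : Matrix (Fin n) (Fin n) ℝ) (B : Matrix (Fin n) (Fin m) ℝ)
    (Q : Matrix (Fin n) (Fin n) ℝ) (R : Matrix (Fin m) (Fin m) ℝ) (s : ℝ)
    (P : Matrix (Fin n) (Fin n) ℝ) : Matrix (Fin n) (Fin n) ℝ :=
  Q + Aᵀ * P * A - s • (Aᵀ * P * B * (R + Bᵀ * P * B)⁻¹ * (Bᵀ * P * A))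

/-- `ricBack A B Q R Qf T σ j` is the solution `P_σ(T − j)` of the switched backward Riccati
recursion with horizon `T`, switching signal `σ` and terminal condition `P_σ(T) = Q_f`;
it is indexed by the number `j` of backward steps, so `P_σ(t) = ricBack A B Q R Qf T σ (T − t)`. -/
noncomputable def ricBack {n m : ℕ} (A : Matrix (Fin n) (Fin n) ℝ) (B : Matrix (Fin n) (Fin m) ℝ)
    (Q : Matrix (Fin n) (Fin n) ℝ) (R : Matrix (Fin m) (Fin m) ℝ)
    (Qf : Matrix (Fin n) (Fin n) ℝ) (T : ℕ) (σ : ℕ → ℝ) : ℕ → Matrix (Fin n) (Fin n) ℝ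
  | 0 => Qf
  | j + 1 => ricStep A B Q R (σ (T - (j + 1))) (ricBack A B Q R Qf T σ j)

theorem ric_S_posDef {n m : ℕ} (B : Matrix (Fin n) (Fin m) ℝ) (R : Matrix (Fin m) (Fin m) ℝ)
    (P : Matrix (Fin n) (Fin n) ℝ) (hR : R.PosDef) (hP : P.PosSemidef) :
    (R + Bᵀ * P * B).PosDef := by
  have h := hP.conjTranspose_mul_mul_same B
  rw [conjTranspose_eq_transpose_of_trivial] at h
  exact hR.add_posSemidef h

theorem ric_conj {n k : ℕ} (C : Matrix (Fin n) (Fin k) ℝ)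
    (P : Matrix (Fin n) (Fin n) ℝ) (hP : P.PosSemidef) : (Cᵀ * P * C).PosSemidef := by
  have h := hP.conjTranspose_mul_mul_same C
  rwa [conjTranspose_eq_transpose_of_trivial] at h

theorem ric_square {n m : ℕ} (A : Matrix (Fin n) (Fin n) ℝ) (B : Matrix (Fin n) (Fin m) ℝ)
    (Q : Matrix (Fin n) (Fin n) ℝ) (R : Matrix (Fin m) (Fin m) ℝ)
    (P : Matrix (Fin n) (Fin n) ℝ) (hR : R.PosDef) (hP : P.PosSemidef)
    (K : Matrix (Fin m) (Fin n) ℝ) :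
    Q + (A + B * K)ᵀ * P * (A + B * K) + Kᵀ * R * K = ricStep A B Q R 1 P +
      (K + (R + Bᵀ * P * B)⁻¹ * (Bᵀ * P * A))ᵀ * (R + Bᵀ * P * B) *
        (K + (R + Bᵀ * P * B)⁻¹ * (Bᵀ * P * A)) := by
  have hS := ric_S_posDef B R P hR hP
  have hu : IsUnit (R + Bᵀ * P * B).det := (Matrix.isUnit_iff_isUnit_det _).1 hS.isUnit
  have hSt : (R + Bᵀ * P * B)ᵀ = R + Bᵀ * P * B := by
    have := hS.isHermitian.eq
    rwa [conjTranspose_eq_transpose_of_trivial] at this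
  have hPt : Pᵀ = P := by
    have := hP.isHermitian.eq
    rwa [conjTranspose_eq_transpose_of_trivial] at this
  have hXt : (Bᵀ * P * A)ᵀ = Aᵀ * P * B := by
    simp [transpose_mul, hPt, Matrix.mul_assoc]
  have h1 : (K + (R + Bᵀ * P * B)⁻¹ * (Bᵀ * P * A))ᵀ * (R + Bᵀ * P * B)
      = Kᵀ * (R + Bᵀ * P * B) + Aᵀ * P * B := by
    rw [transpose_add, transpose_mul, transpose_nonsing_inv, hSt, hXt, Matrix.add_mul,
      Matrix.nonsing_inv_mul_cancel_right _ _ hu]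
  have h2 : Kᵀ * (R + Bᵀ * P * B) * ((R + Bᵀ * P * B)⁻¹ * (Bᵀ * P * A))
      = Kᵀ * (Bᵀ * P * A) := by
    rw [Matrix.mul_assoc, Matrix.mul_nonsing_inv_cancel_left _ _ hu]
  rw [h1, Matrix.mul_add (Kᵀ * (R + Bᵀ * P * B) + Aᵀ * P * B), Matrix.add_mul _ _ ((R + Bᵀ * P * B)⁻¹ * (Bᵀ * P * A)), h2, ricStep,
    one_smul, ← Matrix.mul_assoc (Aᵀ * P * B) _ (Bᵀ * P * A)]
  generalize Aᵀ * P * B * (R + Bᵀ * P * B)⁻¹ * (Bᵀ * P * A) = Z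
  simp only [transpose_add, transpose_mul, Matrix.add_mul, Matrix.mul_add, Matrix.mul_assoc]
  abel

theorem ric_opt {n m : ℕ} (A : Matrix (Fin n) (Fin n) ℝ) (B : Matrix (Fin n) (Fin m) ℝ)
    (Q : Matrix (Fin n) (Fin n) ℝ) (R : Matrix (Fin m) (Fin m) ℝ)
    (P : Matrix (Fin n) (Fin n) ℝ) (hR : R.PosDef) (hP : P.PosSemidef) :
    ∃ K : Matrix (Fin m) (Fin n) ℝ,
      ricStep A B Q R 1 P = Q + (A + B * K)ᵀ * P * (A + B * K) + Kᵀ * R * K := by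
  refine ⟨-((R + Bᵀ * P * B)⁻¹ * (Bᵀ * P * A)), ?_⟩
  rw [ric_square A B Q R P hR hP]
  simp

theorem ricStep_posSemidef {n m : ℕ} (A : Matrix (Fin n) (Fin n) ℝ)
    (B : Matrix (Fin n) (Fin m) ℝ)
    (Q : Matrix (Fin n) (Fin n) ℝ) (R : Matrix (Fin m) (Fin m) ℝ)
    (P : Matrix (Fin n) (Fin n) ℝ) (hQ : Q.PosSemidef) (hR : R.PosDef) (hP : P.PosSemidef)
    (s : ℝ) (hs : s = 0 ∨ s = 1) : (ricStep A B Q R s P).PosSemidef := by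
  rcases hs with rfl | rfl
  · simpa [ricStep] using hQ.add (ric_conj A P hP)
  · obtain ⟨K, hK⟩ := ric_opt A B Q R P hR hP
    rw [hK]
    exact (hQ.add (ric_conj _ P hP)).add (ric_conj K R hR.posSemidef)

theorem ricStep_mono {n m : ℕ} (A : Matrix (Fin n) (Fin n) ℝ)
    (B : Matrix (Fin n) (Fin m) ℝ)
    (Q : Matrix (Fin n) (Fin n) ℝ) (R : Matrix (Fin m) (Fin m) ℝ)
    (P₁ P₂ : Matrix (Fin n) (Fin n) ℝ) (hR : R.PosDef)
    (hP₁ : P₁.PosSemidef) (hP₂ : P₂.PosSemidef) (hP : (P₁ - P₂).PosSemidef)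
    (s₁ s₂ : ℝ) (hs₁ : s₁ = 0 ∨ s₁ = 1) (hs₂ : s₂ = 0 ∨ s₂ = 1) (hs : s₁ ≤ s₂) :
    (ricStep A B Q R s₁ P₁ - ricStep A B Q R s₂ P₂).PosSemidef := by
  -- for every gain `K`, the optimal step from `P₂` lies below the closed-loop step from `P₁`
  have key : ∀ K : Matrix (Fin m) (Fin n) ℝ,
      (Q + (A + B * K)ᵀ * P₁ * (A + B * K) + Kᵀ * R * K - ricStep A B Q R 1 P₂).PosSemidef := by
    intro K
    have h := (ric_conj (A + B * K) _ hP).add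
      (ric_conj (K + (R + Bᵀ * P₂ * B)⁻¹ * (Bᵀ * P₂ * A)) _
        (ric_S_posDef B R P₂ hR hP₂).posSemidef)
    have e := ric_square A B Q R P₂ hR hP₂ K
    rw [eq_sub_iff_add_eq'.2 e.symm, Matrix.mul_sub, Matrix.sub_mul] at h
    convert h using 1
    abel
  rcases hs₁ with rfl | rfl <;> rcases hs₂ with rfl | rfl
  · have h := ric_conj A _ hP
    rw [Matrix.mul_sub, Matrix.sub_mul] at h
    simpa [ricStep] using h
  · simpa [ricStep] using key 0
  · norm_num at hs
  · obtain ⟨K, hK⟩ := ric_opt A B Q R P₁ hR hP₁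
    rw [hK]
    exact key K

/-- If `σ₁ ⪯ σ₂`, then the solutions of the switched backward Riccati recursion with common
terminal condition `Q_f` satisfy `P_{σ₂}(t) ⪯ P_{σ₁}(t)` in the Loewner order for all
`t ≤ T`; in particular the optimal LQR cost `x(0)ᵀ P_σ(0) x(0)` is antitone in `σ`. -/
theorem switched_riccati_antitone {n m T : ℕ}
    (A : Matrix (Fin n) (Fin n) ℝ) (B : Matrix (Fin n) (Fin m) ℝ)
    (Q Qf : Matrix (Fin n) (Fin n) ℝ) (R : Matrix (Fin m) (Fin m) ℝ)
    (hQ : Q.PosSemidef) (hQf : Qf.PosSemidef) (hR : R.PosDef)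
    (σ₁ σ₂ : ℕ → ℝ)
    (hσ₁ : ∀ t < T, σ₁ t = 0 ∨ σ₁ t = 1) (hσ₂ : ∀ t < T, σ₂ t = 0 ∨ σ₂ t = 1)
    (hle : ∀ t < T, σ₁ t ≤ σ₂ t) :
    (∀ t ≤ T, (ricBack A B Q R Qf T σ₁ (T - t) - ricBack A B Q R Qf T σ₂ (T - t)).PosSemidef) ∧
      ∀ x : Fin n → ℝ,
        x ⬝ᵥ (ricBack A B Q R Qf T σ₂ T *ᵥ x) ≤ x ⬝ᵥ (ricBack A B Q R Qf T σ₁ T *ᵥ x) := by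
  have psd : ∀ σ : ℕ → ℝ, (∀ t < T, σ t = 0 ∨ σ t = 1) → ∀ j ≤ T,
      (ricBack A B Q R Qf T σ j).PosSemidef := by
    intro σ hσ j
    induction j with
    | zero => intro _; exact hQf
    | succ j ih =>
      intro hj
      exact ricStep_posSemidef A B Q R _ hQ hR (ih (by omega)) _ (hσ _ (by omega))
  have main : ∀ j ≤ T,
      (ricBack A B Q R Qf T σ₁ j - ricBack A B Q R Qf T σ₂ j).PosSemidef := by
    intro j
    induction j with
    | zero => intro _; simpa [ricBack] using Matrix.PosSemidef.zero
    | succ j ih =>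
      intro hj
      exact ricStep_mono A B Q R _ _ hR (psd σ₁ hσ₁ j (by omega)) (psd σ₂ hσ₂ j (by omega))
        (ih (by omega)) _ _ (hσ₁ _ (by omega)) (hσ₂ _ (by omega)) (hle _ (by omega))
  refine ⟨fun t _ => main _ (Nat.sub_le _ _), fun x => ?_⟩
  have h := (main T le_rfl).dotProduct_mulVec_nonneg x
  rw [Matrix.sub_mulVec, dotProduct_sub, star_trivial] at h
  linarith
end

section
/- Let σ₁, σ₂ be switching signals of length t+1 with σ₁ ⪯ σ₂ and suppose W_{σ₁}(t) and W_{σ₂}(t) are positive definite. Then W_{σ₂}(t)⁻¹ ⪯ W_{σ₁}(t)⁻¹ in the Loewner order, and consequently for every x_f ∈ ℝⁿ the minimum input energy needed to reach x_f satisfies x_fᵀ W_{σ₂}(t)⁻¹ x_f ≤ x_fᵀ W_{σ₁}(t)⁻¹ x_f. -/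
open Matrix

/-- The controllability Gramian `W_σ(t) = Σ_{i=0}^{t} σ(i) A^{t-i} B Bᵀ (Aᵀ)^{t-i}`
of the pair `(A, B)` under the switching signal `σ`. -/
def gramian {n m t : ℕ} (A : Matrix (Fin n) (Fin n) ℝ) (B : Matrix (Fin n) (Fin m) ℝ)
    (σ : Fin (t + 1) → ℝ) : Matrix (Fin n) (Fin n) ℝ :=
  ∑ i : Fin (t + 1), σ i • (A ^ (t - (i : ℕ)) * B * Bᵀ * (Aᵀ) ^ (t - (i : ℕ)))

/-- Inversion is antitone on positive definite real matrices. -/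
lemma posDef_inv_sub_inv {n : ℕ} {P Q : Matrix (Fin n) (Fin n) ℝ}
    (hP : P.PosDef) (hQ : Q.PosDef) (hD : (Q - P).PosSemidef) :
    (P⁻¹ - Q⁻¹).PosSemidef := by
  have hPu : IsUnit P.det := (Matrix.isUnit_iff_isUnit_det P).1 hP.isUnit
  have hQu : IsUnit Q.det := (Matrix.isUnit_iff_isUnit_det Q).1 hQ.isUnit
  have h1 : P⁻¹ - Q⁻¹ = Q⁻¹ * (Q - P) * P⁻¹ := by
    rw [mul_sub, sub_mul, Matrix.nonsing_inv_mul _ hQu, mul_assoc,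
      Matrix.mul_nonsing_inv _ hPu, one_mul, mul_one]
  have h2 : P⁻¹ - Q⁻¹ = P⁻¹ * (Q - P) * Q⁻¹ := by
    rw [mul_sub, sub_mul, Matrix.nonsing_inv_mul _ hPu, mul_assoc,
      Matrix.mul_nonsing_inv _ hQu, one_mul, mul_one]
  have key : P⁻¹ - Q⁻¹ = Q⁻¹ * (Q - P) * Q⁻¹
      + (Q⁻¹ * (Q - P)) * P⁻¹ * ((Q - P) * Q⁻¹) := by
    calc P⁻¹ - Q⁻¹ = Q⁻¹ * (Q - P) * P⁻¹ := h1
      _ = Q⁻¹ * (Q - P) * (Q⁻¹ + (P⁻¹ - Q⁻¹)) := by rw [add_sub_cancel]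
      _ = _ := by rw [h2, mul_add]; simp only [mul_assoc]
  have hQi : (Q⁻¹)ᴴ = Q⁻¹ := hQ.inv.isHermitian
  have hDh : (Q - P)ᴴ = Q - P := hD.isHermitian
  rw [key]
  refine Matrix.PosSemidef.add ?_ ?_
  · have := hD.mul_mul_conjTranspose_same Q⁻¹
    rwa [hQi] at this
  · have := hP.inv.posSemidef.mul_mul_conjTranspose_same (Q⁻¹ * (Q - P))
    rwa [Matrix.conjTranspose_mul, hQi, hDh] at this

/-- The Gramian is monotone in the switching signal. -/
lemma gramian_sub_posSemidef {n m t : ℕ}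
    (A : Matrix (Fin n) (Fin n) ℝ) (B : Matrix (Fin n) (Fin m) ℝ)
    (σ₁ σ₂ : Fin (t + 1) → ℝ) (hle : ∀ i, σ₁ i ≤ σ₂ i) :
    (gramian A B σ₂ - gramian A B σ₁).PosSemidef := by
  unfold gramian
  rw [← Finset.sum_sub_distrib]
  refine Matrix.posSemidef_sum _ fun i _ => ?_
  rw [← sub_smul]
  refine Matrix.PosSemidef.smul ?_ (sub_nonneg.2 (hle i))
  have := Matrix.posSemidef_self_mul_conjTranspose (A ^ (t - (i : ℕ)) * B)
  rw [Matrix.conjTranspose_eq_transpose_of_trivial, Matrix.transpose_mul,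
    Matrix.transpose_pow] at this
  simpa only [mul_assoc, Matrix.mul_assoc] using this

/-- If `σ₁ ⪯ σ₂` and the Gramians `W_{σ₁}(t)`, `W_{σ₂}(t)` are positive definite, then
`W_{σ₂}(t)⁻¹ ⪯ W_{σ₁}(t)⁻¹` in the Loewner order; consequently, for every `x_f` the minimum
input energy required to reach `x_f` satisfies
`x_fᵀ W_{σ₂}(t)⁻¹ x_f ≤ x_fᵀ W_{σ₁}(t)⁻¹ x_f`. -/
theorem gramian_inv_antitone {n m t : ℕ}
    (A : Matrix (Fin n) (Fin n) ℝ) (B : Matrix (Fin n) (Fin m) ℝ)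
    (σ₁ σ₂ : Fin (t + 1) → ℝ)
    (hσ₁ : ∀ i, σ₁ i = 0 ∨ σ₁ i = 1) (hσ₂ : ∀ i, σ₂ i = 0 ∨ σ₂ i = 1)
    (hle : ∀ i, σ₁ i ≤ σ₂ i)
    (hW₁ : (gramian A B σ₁).PosDef) (hW₂ : (gramian A B σ₂).PosDef) :
    ((gramian A B σ₁)⁻¹ - (gramian A B σ₂)⁻¹).PosSemidef ∧
      ∀ xf : Fin n → ℝ,
        xf ⬝ᵥ ((gramian A B σ₂)⁻¹ *ᵥ xf) ≤ xf ⬝ᵥ ((gramian A B σ₁)⁻¹ *ᵥ xf) := by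
  have h := posDef_inv_sub_inv hW₁ hW₂ (gramian_sub_posSemidef A B σ₁ σ₂ hle)
  refine ⟨h, fun xf => ?_⟩
  have h3 := h.dotProduct_mulVec_nonneg xf
  rw [Matrix.sub_mulVec, dotProduct_sub, star_trivial] at h3
  exact sub_nonneg.1 h3
end
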